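/- arXiv:math-ph/0509057 — 2 statements merged into one kernel-verified Lean document; each statement's English description precedes it below -/
import Mathlib

section
/- Let H be a nonzero complex Hilbert space and T a compact operator on H with ‖T‖ < 1. Then σ(Γ(T)) = {0} ∪ {1} ∪ ⋃_{n≥1} { Π_{j=1}^n λ_j : λ_j ∈ σ(T) }, with no closure needed, and Γ(T) itself is a compact operator on the Fock space Γ(H). -/
open scoped InnerProductSpace

/-- An abstract presentation of the `n`-fold Hilbert tensor power of `H`:
a Hilbert space `Hn` together with a map `emb` sending `(x 1, …, x n)` to the
elementary tensor `x 1 ⊗ ⋯ ⊗ x n`, such that inner products of elementary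
tensors multiply and the elementary tensors span a dense subspace. -/
structure TensorPowerStructure (H Hn : Type*) [NormedAddCommGroup H]
    [InnerProductSpace ℂ H] [NormedAddCommGroup Hn] [InnerProductSpace ℂ Hn]
    (n : ℕ) where
  emb : (Fin n → H) → Hn
  inner_emb : ∀ x y : Fin n → H, ⟪emb x, emb y⟫_ℂ = ∏ i, ⟪x i, y i⟫_ℂ
  dense_span : Dense ((Submodule.span ℂ (Set.range emb) : Submodule ℂ Hn) : Set Hn)

/-- `Tn` is the `n`-fold tensor power `T^{⊗n}` of `T`, acting as `T` on each
factor of elementary tensors. -/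
def IsTensorPowerOp {H Hn : Type*} [NormedAddCommGroup H] [InnerProductSpace ℂ H]
    [NormedAddCommGroup Hn] [InnerProductSpace ℂ Hn] {n : ℕ}
    (tp : TensorPowerStructure H Hn n) (T : H →L[ℂ] H) (Tn : Hn →L[ℂ] Hn) : Prop :=
  ∀ x : Fin n → H, Tn (tp.emb x) = tp.emb fun i => T (x i)

/-!
For a compact operator, every nonzero spectral value is an eigenvalue. Since `Γ(T)` is block
diagonal, its eigenvalues are those of the blocks `T^{⊗n}`, and it is the norm limit of its finite
truncations because `‖T^{⊗n}‖ ≤ ‖T‖ⁿ → 0`. The block `T^{⊗n}` is the product of the commuting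
operators `1 ⊗ ⋯ ⊗ T ⊗ ⋯ ⊗ 1`; it is compact, so a nonzero eigenvalue `z` has a finite-dimensional
eigenspace, which contains a joint eigenvector of all the factors. The joint eigenvalues lie in
`σ(T)` since `A ↦ 1 ⊗ ⋯ ⊗ A ⊗ ⋯ ⊗ 1` is an algebra homomorphism, and their product is `z`. The
value `0` comes from the infinite dimension of the Fock space, the value `1` from the block `n = 0`.
-/

section Compact

open Module.End

variable {𝕜 E F : Type*}

theorem isCompactOperator_of_forall_mem_finiteDimensional [NontriviallyNormedField 𝕜]
    [LocallyCompactSpace 𝕜] [NormedAddCommGroup E] [NormedSpace 𝕜 E] [NormedAddCommGroup F]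
    [NormedSpace 𝕜 F] (A : E →L[𝕜] F) (W : Submodule 𝕜 F) [FiniteDimensional 𝕜 W]
    (hA : ∀ x, A x ∈ W) : IsCompactOperator A := by
  have := FiniteDimensional.proper 𝕜 W
  exact (isCompactOperator_of_locallyCompactSpace_rng W.subtypeL).comp_clm (A.codRestrict W hA)

theorem mem_closure_finiteDimensional_range_of_isCompactOperator [RCLike 𝕜]
    [NormedAddCommGroup E] [NormedSpace 𝕜 E] [NormedAddCommGroup F] [InnerProductSpace 𝕜 F]
    {A : E →L[𝕜] F} (hA : IsCompactOperator A) :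
    A ∈ closure {B : E →L[𝕜] F | FiniteDimensional 𝕜 (LinearMap.range B.toLinearMap)} := by
  refine Metric.mem_closure_iff.2 fun ε hε => ?_
  have hcompact : IsCompact (closure (A '' Metric.closedBall 0 1)) :=
    hA.isCompact_closure_image_closedBall (f := A.toLinearMap) 1
  obtain ⟨t, ht, hcover⟩ :=
    Metric.totallyBounded_iff.1 hcompact.totallyBounded (ε / 2) (half_pos hε)
  let W := Submodule.span 𝕜 t
  have : FiniteDimensional 𝕜 W := .span_of_finite 𝕜 ht
  refine ⟨W.starProjection ∘L A, ?_, ?_⟩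
  · refine Submodule.finiteDimensional_of_le (S₂ := W) ?_
    rintro _ ⟨x, rfl⟩
    exact W.starProjection_apply_mem (A x)
  · refine lt_of_le_of_lt ?_ (half_lt_self hε)
    rw [dist_eq_norm]
    let _ := NormedSpace.restrictScalars ℝ 𝕜 E
    refine ContinuousLinearMap.opNorm_le_of_unit_norm (half_pos hε).le fun x hx => ?_
    have hAx : A x ∈ closure (A '' Metric.closedBall 0 1) :=
      subset_closure ⟨x, by simp [hx], rfl⟩
    obtain ⟨y, hyt, hy⟩ := Set.mem_iUnion₂.1 (hcover hAx)
    calc ‖A x - W.starProjection (A x)‖ = ⨅ w : W, ‖A x - w‖ := W.starProjection_minimal _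
      _ ≤ ‖A x - y‖ := ciInf_le ⟨0, Set.forall_mem_range.2 fun w => norm_nonneg _⟩
          (⟨y, Submodule.subset_span hyt⟩ : W)
      _ ≤ ε / 2 := by rw [← dist_eq_norm]; exact (Metric.mem_ball.1 hy).le

theorem finiteDimensional_eigenspace_of_isCompactOperator [NontriviallyNormedField 𝕜]
    [CompleteSpace 𝕜] [NormedAddCommGroup E] [NormedSpace 𝕜 E] {A : E →L[𝕜] E}
    (hA : IsCompactOperator A) {z : 𝕜} (hz : z ≠ 0) :
    FiniteDimensional 𝕜 (eigenspace A.toLinearMap z) := by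
  have hclosed : IsClosed (eigenspace A.toLinearMap z : Set E) := by
    have : (eigenspace A.toLinearMap z : Set E) = {v | A v = z • v} :=
      Set.ext fun v => mem_eigenspace_iff
    rw [this]
    exact isClosed_eq A.continuous (continuous_const_smul z)
  have hmaps := mapsTo_genEigenspace_of_comm (Commute.refl A.toLinearMap) z 1
  have hid : z⁻¹ • ⇑(A.toLinearMap.restrict hmaps) = id :=
    funext fun v => Subtype.ext <| (inv_smul_eq_iff₀ hz).2 (mem_eigenspace_iff.1 v.2)
  refine .of_isCompactOperator_id (𝕜 := 𝕜) ?_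
  rw [← hid]
  exact (hA.restrict (f := A.toLinearMap) hmaps hclosed).smul z⁻¹

theorem zero_mem_spectrum_of_isCompactOperator [NontriviallyNormedField 𝕜] [CompleteSpace 𝕜]
    [NormedAddCommGroup E] [NormedSpace 𝕜 E] {A : E →L[𝕜] E} (hA : IsCompactOperator A)
    (hE : ¬ FiniteDimensional 𝕜 E) : (0 : 𝕜) ∈ spectrum 𝕜 A := by
  rw [spectrum.zero_mem_iff]
  intro hunit
  obtain ⟨B, hBA⟩ := hunit.exists_left_inv
  have hid : IsCompactOperator (B * A) := hA.clm_comp B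
  rw [hBA] at hid
  exact hE (.of_isCompactOperator_id hid)

theorem exists_common_eigenvector {K V ι : Type*} [Field K] [IsAlgClosed K] [AddCommGroup V]
    [Module K V] [FiniteDimensional K V] [Nontrivial V] (f : ι → Module.End K V)
    (hf : ∀ i j, Commute (f i) (f j)) : ∃ v ≠ 0, ∀ i, ∃ c : K, f i v = c • v := by
  -- On a minimal nonzero invariant subspace, each `f i` is a scalar: its eigenspaces there are
  -- invariant, hence everything.
  let invariant : Set (Submodule K V) := {U | U ≠ ⊥ ∧ ∀ i, Set.MapsTo (f i) U U}
  obtain ⟨U, ⟨hU0, hU⟩, hmin⟩ := wellFounded_lt.has_min invariant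
    ⟨⊤, top_ne_bot, fun i v _ => Submodule.mem_top⟩
  have : Nontrivial U := Submodule.nontrivial_iff_ne_bot.2 hU0
  have hscalar : ∀ i, ∃ c : K, U ≤ eigenspace (f i) c := fun i => by
    obtain ⟨c, hc⟩ := exists_eigenvalue ((f i).restrict (hU i))
    obtain ⟨v, hv⟩ := hc.exists_hasEigenvector
    have hvc : (v : V) ∈ eigenspace (f i) c :=
      mem_eigenspace_iff.2 (congrArg Subtype.val hv.apply_eq_smul)
    have hmem : U ⊓ eigenspace (f i) c ∈ invariant :=
      ⟨fun h => hv.2 (Subtype.ext ((Submodule.mem_bot K).1 (h ▸ ⟨v.2, hvc⟩))),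
        fun j w hw => ⟨hU j hw.1, mapsTo_genEigenspace_of_comm (hf i j) c 1 hw.2⟩⟩
    exact ⟨c, inf_eq_left.1 (inf_le_left.eq_of_not_lt (hmin _ hmem))⟩
  obtain ⟨v, hvU, hv0⟩ := Submodule.exists_mem_ne_zero_of_ne_bot hU0
  exact ⟨v, hv0, fun i => (hscalar i).imp fun c hc => mem_eigenspace_iff.1 (hc hvU)⟩

theorem exists_common_eigenvector_of_isCompactOperator {ι : Type*} [NontriviallyNormedField 𝕜]
    [CompleteSpace 𝕜] [IsAlgClosed 𝕜] [NormedAddCommGroup E] [NormedSpace 𝕜 E] {A : E →L[𝕜] E}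
    (hA : IsCompactOperator A) {z : 𝕜} (hz : z ≠ 0) (hAz : HasEigenvalue A.toLinearMap z)
    (f : ι → Module.End 𝕜 E) (hfA : ∀ i, Commute A.toLinearMap (f i))
    (hf : ∀ i j, Commute (f i) (f j)) :
    ∃ v ≠ 0, A v = z • v ∧ ∀ i, ∃ c : 𝕜, f i v = c • v := by
  have := finiteDimensional_eigenspace_of_isCompactOperator hA hz
  have : Nontrivial (eigenspace A.toLinearMap z) := Submodule.nontrivial_iff_ne_bot.2 hAz
  have hmaps := fun i => mapsTo_genEigenspace_of_comm (hfA i) z 1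
  obtain ⟨v, hv0, hv⟩ := exists_common_eigenvector
    (fun i => ((f i).restrict (hmaps i) : Module.End 𝕜 (eigenspace A.toLinearMap z)))
    fun i j => LinearMap.ext fun w => Subtype.ext (LinearMap.congr_fun (hf i j).eq w)
  exact ⟨v, fun h => hv0 (Subtype.ext h), mem_eigenspace_iff.1 v.2,
    fun i => (hv i).imp fun c hc => congrArg Subtype.val hc⟩

end Compact

section HilbertSum

open Module.End Filter

variable {𝕜 ι F : Type*} [RCLike 𝕜] {E : ι → Type*} [∀ i, NormedAddCommGroup (E i)]
  [∀ i, InnerProductSpace 𝕜 (E i)] [NormedAddCommGroup F] [InnerProductSpace 𝕜 F]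
  {V : ∀ i, E i →ₗᵢ[𝕜] F}

theorem not_finiteDimensional_of_orthogonalFamily [Infinite ι] [∀ i, Nontrivial (E i)]
    (hV : OrthogonalFamily 𝕜 E V) : ¬ FiniteDimensional 𝕜 F := by
  intro
  choose x hx using fun i => exists_ne (0 : E i)
  have hindep : LinearIndependent 𝕜 fun i => V i (x i) :=
    linearIndependent_of_ne_zero_of_inner_eq_zero
      (fun i => (map_ne_zero_iff (V i) (V i).injective).2 (hx i))
      fun i j hij => hV hij (x i) (x j)
  exact not_finite_iff_infinite.2 ‹Infinite ι› hindep.finite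

theorem isHilbertSum_of_dense_span [CompleteSpace F] [∀ i, CompleteSpace (E i)]
    (hV : OrthogonalFamily 𝕜 E V)
    (hdense : Dense (Submodule.span 𝕜 (⋃ i, Set.range (V i)) : Set F)) : IsHilbertSum 𝕜 E V := by
  refine .mk hV ?_
  rw [← Submodule.dense_iff_topologicalClosure_eq_top.1 hdense]
  refine Submodule.topologicalClosure_mono (Submodule.span_le.2 (Set.iUnion_subset fun i => ?_))
  exact le_iSup (fun i => LinearMap.range (V i).toLinearMap) i

/-- `G` acts on the summand `V i (E i)` of `F` as the operator `A i`, i.e. `G = ⨁ i, A i`; the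
second quantization `Γ(T)` is the case `A n = T^{⊗n}`. -/
def IsBlockDiagonal (V : ∀ i, E i →ₗᵢ[𝕜] F) (A : ∀ i, E i →L[𝕜] E i) (G : F →L[𝕜] F) : Prop :=
  ∀ i x, G (V i x) = V i (A i x)

variable [CompleteSpace F]

/-- The `i`-th coordinate map of a Hilbert sum, that is, the orthogonal projection onto the `i`-th
summand followed by its identification with `E i`. -/
noncomputable def hilbertSumCoord (hV : IsHilbertSum 𝕜 E V) (i : ι) : F →L[𝕜] E i :=
  lp.evalCLM 𝕜 E 2 i ∘L hV.linearIsometryEquiv.toContinuousLinearEquiv.toContinuousLinearMap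

variable (hV : IsHilbertSum 𝕜 E V) {A : ∀ i, E i →L[𝕜] E i} {G : F →L[𝕜] F}

theorem hilbertSumCoord_apply (i : ι) (v : F) :
    hilbertSumCoord hV i v = hV.linearIsometryEquiv v i :=
  rfl

theorem norm_le_of_forall_norm_hilbertSumCoord_le {v w : F}
    (h : ∀ i, ‖hilbertSumCoord hV i v‖ ≤ ‖hilbertSumCoord hV i w‖) : ‖v‖ ≤ ‖w‖ := by
  rw [← hV.linearIsometryEquiv.norm_map v, ← hV.linearIsometryEquiv.norm_map w]
  exact lp.norm_mono two_ne_zero h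

theorem exists_hilbertSumCoord_ne_zero {v : F} (hv : v ≠ 0) : ∃ i, hilbertSumCoord hV i v ≠ 0 := by
  by_contra! h
  exact hv (norm_le_zero_iff.1 (by
    simpa using norm_le_of_forall_norm_hilbertSumCoord_le hV (w := 0) fun i => by simp [h i]))

theorem hilbertSumCoord_map_eq_single [DecidableEq ι] (i j : ι) (x : E j) :
    hilbertSumCoord hV i (V j x) = (Pi.single j x : ∀ i, E i) i := by
  rw [hilbertSumCoord_apply, ← hV.linearIsometryEquiv_symm_apply_single,
    LinearIsometryEquiv.apply_symm_apply, lp.coeFn_single]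

theorem hasSum_hilbertSumCoord (v : F) : HasSum (fun i => V i (hilbertSumCoord hV i v)) v := by
  simpa [hilbertSumCoord_apply] using
    hV.hasSum_linearIsometryEquiv_symm (hV.linearIsometryEquiv v)

theorem hilbertSumCoord_map_same (i : ι) (x : E i) : hilbertSumCoord hV i (V i x) = x := by
  classical
  rw [hilbertSumCoord_map_eq_single, Pi.single_eq_same]

theorem hilbertSumCoord_map_of_ne {i j : ι} (hij : i ≠ j) (x : E j) :
    hilbertSumCoord hV i (V j x) = 0 := by
  classical
  rw [hilbertSumCoord_map_eq_single, Pi.single_eq_of_ne hij]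

theorem IsBlockDiagonal.hilbertSumCoord_map (hG : IsBlockDiagonal V A G) (i : ι) (v : F) :
    hilbertSumCoord hV i (G v) = A i (hilbertSumCoord hV i v) := by
  have hsum := (hasSum_hilbertSumCoord hV v).mapL (hilbertSumCoord hV i ∘L G)
  have hsingle := hasSum_single i fun j hji => show
      (hilbertSumCoord hV i ∘L G) (V j (hilbertSumCoord hV j v)) = 0 by
    rw [ContinuousLinearMap.comp_apply, hG, hilbertSumCoord_map_of_ne hV hji.symm]
  rw [ContinuousLinearMap.comp_apply, hG, hilbertSumCoord_map_same] at hsingle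
  exact hsum.unique hsingle

include hV in
theorem IsBlockDiagonal.norm_le (hG : IsBlockDiagonal V A G) {C : ℝ} (hC : 0 ≤ C)
    (hA : ∀ i, ‖A i‖ ≤ C) : ‖G‖ ≤ C := by
  refine G.opNorm_le_bound hC fun v => ?_
  have hnorm : ‖G v‖ ≤ ‖(C : 𝕜) • v‖ := by
    refine norm_le_of_forall_norm_hilbertSumCoord_le hV fun i => ?_
    rw [hG.hilbertSumCoord_map hV, map_smul, norm_smul, RCLike.norm_of_nonneg hC]
    exact (A i).le_of_opNorm_le (hA i) _
  rwa [norm_smul, RCLike.norm_of_nonneg hC] at hnorm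

include hV in
theorem IsBlockDiagonal.hasEigenvalue_iff (hG : IsBlockDiagonal V A G) (z : 𝕜) :
    HasEigenvalue G.toLinearMap z ↔ ∃ i, HasEigenvalue (A i).toLinearMap z := by
  constructor
  · intro hz
    obtain ⟨v, hv⟩ := hz.exists_hasEigenvector
    obtain ⟨i, hi⟩ := exists_hilbertSumCoord_ne_zero hV hv.2
    have hGv : G v = z • v := hv.apply_eq_smul
    refine ⟨i, hasEigenvalue_of_hasEigenvector ⟨mem_eigenspace_iff.2 ?_, hi⟩⟩
    rw [ContinuousLinearMap.coe_coe, ← hG.hilbertSumCoord_map hV, hGv, map_smul]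
  · rintro ⟨i, hi⟩
    obtain ⟨x, hx⟩ := hi.exists_hasEigenvector
    have hAx : A i x = z • x := hx.apply_eq_smul
    refine hasEigenvalue_of_hasEigenvector (x := V i x)
      ⟨mem_eigenspace_iff.2 ?_, (map_ne_zero_iff (V i) (V i).injective).2 hx.2⟩
    rw [ContinuousLinearMap.coe_coe, hG, hAx, map_smul]

/-- The direct sum of the operators `A i` for `i ∈ s`, extended by zero to the other summands; these
finite truncations approximate a block diagonal operator. -/
noncomputable def blockTruncation (A : ∀ i, E i →L[𝕜] E i) (s : Finset ι) : F →L[𝕜] F :=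
  ∑ i ∈ s, (V i).toContinuousLinearMap ∘L A i ∘L hilbertSumCoord hV i

theorem isCompactOperator_blockTruncation (hA : ∀ i, IsCompactOperator (A i)) (s : Finset ι) :
    IsCompactOperator (blockTruncation hV A s) :=
  (compactOperator (RingHom.id 𝕜) F F).sum_mem fun i _ =>
    ((hA i).comp_clm (hilbertSumCoord hV i)).clm_comp (V i).toContinuousLinearMap

theorem IsBlockDiagonal.sub_blockTruncation [DecidableEq ι] (hG : IsBlockDiagonal V A G)
    (s : Finset ι) :
    IsBlockDiagonal V (fun i => if i ∈ s then 0 else A i) (G - blockTruncation hV A s) := by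
  intro j x
  have hne : ∀ i ≠ j, ((V i).toContinuousLinearMap ∘L A i ∘L hilbertSumCoord hV i) (V j x) = 0 :=
    fun i hij => by simp [hilbertSumCoord_map_of_ne hV hij]
  rw [sub_apply, hG, blockTruncation, sum_apply]
  dsimp only
  split_ifs with hj
  · rw [Finset.sum_eq_single_of_mem j hj fun i _ => hne i]
    simp [hilbertSumCoord_map_same hV]
  · rw [Finset.sum_eq_zero fun i hi => hne i (ne_of_mem_of_not_mem hi hj), sub_zero]

include hV in
theorem IsBlockDiagonal.isCompactOperator (hG : IsBlockDiagonal V A G)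
    (hA : ∀ i, IsCompactOperator (A i)) (hA0 : Tendsto (fun i => ‖A i‖) cofinite (nhds 0)) :
    IsCompactOperator G := by
  classical
  refine isCompactOperator_of_tendsto (l := atTop) (F := blockTruncation hV A) ?_
    (.of_forall (isCompactOperator_blockTruncation hV hA))
  refine Metric.tendsto_atTop.2 fun ε hε => ?_
  have hfin : {i | ¬ ‖A i‖ < ε / 2}.Finite := hA0.eventually_lt_const (half_pos hε)
  refine ⟨hfin.toFinset, fun s hs => ?_⟩
  rw [dist_comm, dist_eq_norm]
  refine lt_of_le_of_lt ?_ (half_lt_self hε)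
  refine (hG.sub_blockTruncation hV s).norm_le hV (half_pos hε).le fun i => ?_
  split_ifs with hi
  · simpa using (half_pos hε).le
  · by_contra hlt
    exact hi (hs (hfin.mem_toFinset.2 fun h => hlt h.le))

end HilbertSum

section Gram

variable {𝕜 ι E E' E'' : Type*}

theorem exists_star_mul_self_add_star_mul_self_eq_norm_sq {A : Type*} [CStarAlgebra A]
    [PartialOrder A] [StarOrderedRing A] (a : A) :
    ∃ b : A, star a * a + star b * b = algebraMap ℝ A (‖a‖ ^ 2) := by
  obtain ⟨b, hb⟩ := CStarAlgebra.nonneg_iff_eq_star_mul_self.1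
    (sub_nonneg.2 (CStarAlgebra.star_mul_le_algebraMap_norm_sq (a := a)))
  exact ⟨b, by rw [← hb, add_sub_cancel]⟩

theorem exists_inner_add_inner_eq_norm_sq_mul_inner [NormedAddCommGroup E]
    [InnerProductSpace ℂ E] [CompleteSpace E] (A : E →L[ℂ] E) :
    ∃ B : E →L[ℂ] E, ∀ x y, ⟪A x, A y⟫_ℂ + ⟪B x, B y⟫_ℂ = (‖A‖ ^ 2 : ℝ) * ⟪x, y⟫_ℂ := by
  obtain ⟨B, hB⟩ := exists_star_mul_self_add_star_mul_self_eq_norm_sq A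
  refine ⟨B, fun x y => ?_⟩
  have h := congrArg (fun S : E →L[ℂ] E => ⟪x, S y⟫_ℂ) hB
  simpa [ContinuousLinearMap.star_eq_adjoint, ContinuousLinearMap.adjoint_inner_right,
    inner_add_right, Algebra.algebraMap_eq_smul_one, inner_smul_right_eq_smul] using h

variable [RCLike 𝕜] [NormedAddCommGroup E] [InnerProductSpace 𝕜 E] [NormedAddCommGroup E']
  [InnerProductSpace 𝕜 E'] [NormedAddCommGroup E''] [InnerProductSpace 𝕜 E'']

theorem norm_linearCombination_le_of_inner_add_inner_eq {u : ι → E} {v : ι → E'} {w : ι → E''}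
    {r : ℝ} (hr : 0 ≤ r)
    (h : ∀ x y, ⟪u x, u y⟫_𝕜 + ⟪v x, v y⟫_𝕜 = (r ^ 2 : ℝ) * ⟪w x, w y⟫_𝕜) (c : ι →₀ 𝕜) :
    ‖Finsupp.linearCombination 𝕜 u c‖ ≤ r * ‖Finsupp.linearCombination 𝕜 w c‖ := by
  have hinner : ⟪Finsupp.linearCombination 𝕜 u c, Finsupp.linearCombination 𝕜 u c⟫_𝕜
      + ⟪Finsupp.linearCombination 𝕜 v c, Finsupp.linearCombination 𝕜 v c⟫_𝕜
      = (r ^ 2 : ℝ) * ⟪Finsupp.linearCombination 𝕜 w c, Finsupp.linearCombination 𝕜 w c⟫_𝕜 := by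
    simp only [Finsupp.linearCombination_apply, Finsupp.sum, sum_inner, inner_sum,
      inner_smul_left, inner_smul_right, Finset.mul_sum, ← Finset.sum_add_distrib]
    refine Finset.sum_congr rfl fun y _ => Finset.sum_congr rfl fun x _ => ?_
    linear_combination c y * starRingEnd 𝕜 (c x) * h x y
  simp only [inner_self_eq_norm_sq_to_K] at hinner
  norm_cast at hinner
  refine le_of_sq_le_sq ?_ (by positivity)
  rw [mul_pow, ← hinner]
  exact le_add_of_nonneg_right (sq_nonneg _)

end Gram

theorem prod_map_smul_eq_of_forall_smul_eq {M R V ι : Type*} [Monoid M] [CommMonoid R]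
    [MulAction M V] [MulAction R V] [SMulCommClass M R V] {f : ι → M} {c : ι → R} {v : V}
    (h : ∀ i, f i • v = c i • v) (l : List ι) : (l.map f).prod • v = (l.map c).prod • v := by
  induction l with
  | nil => simp
  | cons i l ih =>
    simp only [List.map_cons, List.prod_cons]
    rw [mul_smul, ih, smul_comm, h, smul_smul, mul_comm]

namespace TensorPowerStructure

variable {H K X : Type*} [NormedAddCommGroup H] [InnerProductSpace ℂ H]
  [NormedAddCommGroup K] [InnerProductSpace ℂ K] [NormedAddCommGroup X] [NormedSpace ℂ X]
  {n : ℕ} (tp : TensorPowerStructure H K n)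

section Emb

theorem norm_emb (x : Fin n → H) : ‖tp.emb x‖ = ∏ i, ‖x i‖ := by
  have h := tp.inner_emb x x
  simp only [inner_self_eq_norm_sq_to_K] at h
  rw [Finset.prod_pow] at h
  norm_cast at h
  exact (pow_left_inj₀ (norm_nonneg _) (by positivity) two_ne_zero).1 h

include tp in
theorem nontrivial [Nontrivial H] : Nontrivial K := by
  obtain ⟨e, he⟩ := exists_ne (0 : H)
  refine ⟨tp.emb fun _ => e, 0, norm_ne_zero_iff.1 ?_⟩
  rw [norm_emb]
  exact Finset.prod_ne_zero_iff.2 fun _ _ => norm_ne_zero_iff.2 he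

theorem inner_emb_update_update (i : Fin n) (x y : Fin n → H) (a b : H) :
    ⟪tp.emb (Function.update x i a), tp.emb (Function.update y i b)⟫_ℂ
      = ⟪a, b⟫_ℂ * ∏ j ∈ Finset.univ.erase i, ⟪x j, y j⟫_ℂ := by
  rw [tp.inner_emb, ← Finset.mul_prod_erase _ _ (Finset.mem_univ i)]
  refine congrArg₂ _ (by simp) (Finset.prod_congr rfl fun j hj => ?_)
  simp [Finset.ne_of_mem_erase hj]

theorem inner_emb_update (i : Fin n) (x y : Fin n → H) (b : H) :
    ⟪tp.emb x, tp.emb (Function.update y i b)⟫_ℂ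
      = ⟪x i, b⟫_ℂ * ∏ j ∈ Finset.univ.erase i, ⟪x j, y j⟫_ℂ := by
  simpa using tp.inner_emb_update_update i x y (x i) b

theorem eq_of_forall_inner_emb {u v : K} (h : ∀ y, ⟪tp.emb y, u⟫_ℂ = ⟪tp.emb y, v⟫_ℂ) :
    u = v := by
  have heq : innerSLFlip ℂ u = innerSLFlip ℂ v :=
    ContinuousLinearMap.ext_on tp.dense_span (Set.forall_mem_range.2 h)
  exact ext_inner_left ℂ fun w => congrArg (fun φ => φ w) heq

theorem clm_ext {A B : K →L[ℂ] X} (h : ∀ x, A (tp.emb x) = B (tp.emb x)) : A = B :=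
  ContinuousLinearMap.ext_on tp.dense_span (Set.forall_mem_range.2 h)

theorem map_mem_of_forall_map_emb_mem {A : K →L[ℂ] X} {W : Submodule ℂ X}
    (hW : IsClosed (W : Set X)) (h : ∀ x, A (tp.emb x) ∈ W) (v : K) : A v ∈ W := by
  have hspan : Submodule.span ℂ (Set.range tp.emb) ≤ W.comap A.toLinearMap :=
    Submodule.span_le.2 (Set.range_subset_iff.2 h)
  exact closure_minimal hspan (hW.preimage A.continuous) (tp.dense_span v)

/-- The elementary tensor map, bundled as a multilinear map. Multilinearity is not part of
`TensorPowerStructure`; it is forced by the inner products of elementary tensors. -/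
noncomputable def embMultilinear : MultilinearMap ℂ (fun _ : Fin n => H) K :=
  .mk' tp.emb
    (fun x i a b => tp.eq_of_forall_inner_emb fun y => by
      simp only [inner_add_right, inner_emb_update, add_mul])
    (fun x i c a => tp.eq_of_forall_inner_emb fun y => by
      simp only [inner_smul_right, inner_emb_update, mul_assoc])

theorem emb_update_add (x : Fin n → H) (i : Fin n) (a b : H) :
    tp.emb (Function.update x i (a + b))
      = tp.emb (Function.update x i a) + tp.emb (Function.update x i b) :=
  tp.embMultilinear.map_update_add x i a b

theorem emb_update_smul (x : Fin n → H) (i : Fin n) (c : ℂ) (a : H) :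
    tp.emb (Function.update x i (c • a)) = c • tp.emb (Function.update x i a) :=
  tp.embMultilinear.map_update_smul x i c a

theorem emb_smul_univ (c : Fin n → ℂ) (x : Fin n → H) :
    tp.emb (fun i => c i • x i) = (∏ i, c i) • tp.emb x :=
  tp.embMultilinear.map_smul_univ c x

theorem denseRange_linearCombination_emb :
    DenseRange (Finsupp.linearCombination ℂ tp.emb) := by
  have h := tp.dense_span
  rwa [← Finsupp.range_linearCombination] at h

end Emb

section OnFactor

variable [CompleteSpace H]

theorem norm_linearCombination_emb_update_le (i : Fin n) (A : H →L[ℂ] H)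
    (c : (Fin n → H) →₀ ℂ) :
    ‖Finsupp.linearCombination ℂ (fun x => tp.emb (Function.update x i (A (x i)))) c‖
      ≤ ‖A‖ * ‖Finsupp.linearCombination ℂ tp.emb c‖ := by
  -- With `A⋆A + B⋆B = ‖A‖²`, the Gram kernels of the tensors with `A` and `B` inserted add up to
  -- `‖A‖²` times that of the original tensors.
  obtain ⟨B, hB⟩ := exists_inner_add_inner_eq_norm_sq_mul_inner A
  refine norm_linearCombination_le_of_inner_add_inner_eq (norm_nonneg A)
    (v := fun x => tp.emb (Function.update x i (B (x i)))) (fun x y => ?_) c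
  rw [inner_emb_update_update, inner_emb_update_update, ← add_mul, hB, tp.inner_emb,
    ← Finset.mul_prod_erase _ _ (Finset.mem_univ i), mul_assoc]
  rfl

variable [CompleteSpace K]

/-- The operator `1 ⊗ ⋯ ⊗ A ⊗ ⋯ ⊗ 1` with `A` in the `i`-th factor, extended by continuity from
linear combinations of elementary tensors. -/
noncomputable def onFactor (i : Fin n) (A : H →L[ℂ] H) : K →L[ℂ] K :=
  (Finsupp.linearCombination ℂ fun x => tp.emb (Function.update x i (A (x i)))).extendOfNorm
    (Finsupp.linearCombination ℂ tp.emb)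

theorem onFactor_emb (i : Fin n) (A : H →L[ℂ] H) (x : Fin n → H) :
    tp.onFactor i A (tp.emb x) = tp.emb (Function.update x i (A (x i))) := by
  have h := LinearMap.extendOfNorm_eq tp.denseRange_linearCombination_emb
    ⟨_, tp.norm_linearCombination_emb_update_le i A⟩ (Finsupp.single x 1)
  rwa [Finsupp.linearCombination_single, Finsupp.linearCombination_single, one_smul,
    one_smul] at h

theorem norm_onFactor_le (i : Fin n) (A : H →L[ℂ] H) : ‖tp.onFactor i A‖ ≤ ‖A‖ :=
  LinearMap.opNorm_extendOfNorm_le tp.denseRange_linearCombination_emb (norm_nonneg A)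
    (tp.norm_linearCombination_emb_update_le i A)

/-- `onFactor` as an algebra homomorphism, so that it is continuous and shrinks spectra. -/
noncomputable def onFactorHom (i : Fin n) : (H →L[ℂ] H) →ₐ[ℂ] (K →L[ℂ] K) :=
  .ofLinearMap
    { toFun := tp.onFactor i
      map_add' := fun A B => tp.clm_ext fun x => by simp [onFactor_emb, emb_update_add]
      map_smul' := fun c A => tp.clm_ext fun x => by simp [onFactor_emb, emb_update_smul] }
    (tp.clm_ext fun x => by simp [onFactor_emb])
    (fun A B => tp.clm_ext fun x => by simp [onFactor_emb])

theorem continuous_onFactor (i : Fin n) : Continuous (tp.onFactor i) :=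
  AddMonoidHomClass.continuous_of_bound (tp.onFactorHom i) 1 fun A =>
    (tp.norm_onFactor_le i A).trans_eq (one_mul _).symm

theorem commute_onFactor {i j : Fin n} (hij : i ≠ j) (A B : H →L[ℂ] H) :
    Commute (tp.onFactor i A) (tp.onFactor j B) :=
  tp.clm_ext fun x => by
    simp [onFactor_emb, Function.update_of_ne, hij, hij.symm, Function.update_comm hij]

theorem mem_spectrum_of_hasEigenvalue_onFactor {i : Fin n} {A : H →L[ℂ] H} {c : ℂ}
    (hc : Module.End.HasEigenvalue (tp.onFactor i A).toLinearMap c) : c ∈ spectrum ℂ A :=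
  AlgHom.spectrum_apply_subset (tp.onFactorHom i) A <| by
    rw [ContinuousLinearMap.spectrum_eq]
    exact hc.mem_spectrum

end OnFactor

section TensorOp

variable [CompleteSpace H] [CompleteSpace K]

/-- The operator `A 0 ⊗ ⋯ ⊗ A (n - 1)`, as the product of the commuting operators
`onFactor i (A i)`. -/
noncomputable def tensorOp (A : Fin n → H →L[ℂ] H) : K →L[ℂ] K :=
  ((List.finRange n).map fun i => tp.onFactor i (A i)).prod

theorem prod_map_onFactor_emb (A : Fin n → H →L[ℂ] H) {l : List (Fin n)} (hl : l.Nodup)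
    (x : Fin n → H) :
    (l.map fun i => tp.onFactor i (A i)).prod (tp.emb x)
      = tp.emb fun i => if i ∈ l then A i (x i) else x i := by
  induction l with
  | nil => simp
  | cons j l ih =>
    obtain ⟨hj, hl⟩ := List.nodup_cons.1 hl
    rw [List.map_cons, List.prod_cons, mul_apply_eq_comp, ih hl, onFactor_emb]
    congr 1
    ext i
    by_cases hij : i = j
    · subst hij
      simp [hj]
    · simp [hij]

theorem tensorOp_emb (A : Fin n → H →L[ℂ] H) (x : Fin n → H) :
    tp.tensorOp A (tp.emb x) = tp.emb fun i => A i (x i) := by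
  simp [tensorOp, prod_map_onFactor_emb tp A (List.nodup_finRange n)]

theorem eq_tensorOp {T : H →L[ℂ] H} {S : K →L[ℂ] K} (hS : IsTensorPowerOp tp T S) :
    S = tp.tensorOp fun _ => T :=
  tp.clm_ext fun x => by rw [hS x, tensorOp_emb]

theorem norm_tensorOp_le (A : Fin n → H →L[ℂ] H) : ‖tp.tensorOp A‖ ≤ ∏ i, ‖A i‖ := by
  have hlist : ∀ l : List (Fin n),
      ‖(l.map fun i => tp.onFactor i (A i)).prod‖ ≤ (l.map fun i => ‖A i‖).prod := fun l => by
    induction l with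
    | nil => exact ContinuousLinearMap.norm_id_le
    | cons i l ih =>
      simp only [List.map_cons, List.prod_cons]
      exact norm_mul_le_of_le (tp.norm_onFactor_le i (A i)) ih
  rw [← List.prod_ofFn, List.ofFn_eq_map]
  exact hlist (List.finRange n)

theorem continuous_tensorOp : Continuous tp.tensorOp :=
  continuous_list_prod _ fun i _ => (tp.continuous_onFactor i).comp (continuous_apply i)

theorem isCompactOperator_tensorOp_of_finiteDimensional_range {A : Fin n → H →L[ℂ] H}
    (hA : ∀ i, FiniteDimensional ℂ (LinearMap.range (A i).toLinearMap)) :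
    IsCompactOperator (tp.tensorOp A) := by
  let M : MultilinearMap ℂ (fun i => LinearMap.range (A i).toLinearMap) K :=
    tp.embMultilinear.compLinearMap fun i => (LinearMap.range (A i).toLinearMap).subtype
  let W := LinearMap.range (PiTensorProduct.lift M)
  refine isCompactOperator_of_forall_mem_finiteDimensional (tp.tensorOp A) W <|
    tp.map_mem_of_forall_map_emb_mem W.closed_of_finiteDimensional fun x => ?_
  rw [tensorOp_emb]
  exact ⟨PiTensorProduct.tprod ℂ fun i => ⟨A i (x i), x i, rfl⟩, PiTensorProduct.lift.tprod _⟩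

theorem isCompactOperator_tensorOp {A : Fin n → H →L[ℂ] H} (hA : ∀ i, IsCompactOperator (A i)) :
    IsCompactOperator (tp.tensorOp A) := by
  have hclosed : IsClosed {B | IsCompactOperator (tp.tensorOp B)} :=
    isClosed_setOfPred_isCompactOperator.preimage tp.continuous_tensorOp
  refine closure_minimal (s := Set.univ.pi fun _ => {B : H →L[ℂ] H |
    FiniteDimensional ℂ (LinearMap.range B.toLinearMap)}) (fun B hB =>
      tp.isCompactOperator_tensorOp_of_finiteDimensional_range fun i => hB i trivial) hclosed ?_
  rw [closure_pi_set]
  exact fun i _ => mem_closure_finiteDimensional_range_of_isCompactOperator (hA i)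

theorem exists_eq_prod_of_hasEigenvalue_tensorOp {A : Fin n → H →L[ℂ] H}
    (hA : ∀ i, IsCompactOperator (A i)) {z : ℂ} (hz : z ≠ 0)
    (hAz : Module.End.HasEigenvalue (tp.tensorOp A).toLinearMap z) :
    ∃ l : Fin n → ℂ, (∀ j, l j ∈ spectrum ℂ (A j)) ∧ z = ∏ j, l j := by
  have hcomm : ∀ i j, Commute (tp.onFactor i (A i)) (tp.onFactor j (A j)) := fun i j => by
    obtain rfl | hij := eq_or_ne i j
    exacts [.refl _, tp.commute_onFactor hij _ _]
  have hcomm_tensorOp : ∀ i, Commute (tp.tensorOp A) (tp.onFactor i (A i)) := fun i =>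
    .list_prod_left _ _ (List.forall_mem_map.2 fun j _ => hcomm j i)
  obtain ⟨w, hw0, hzw, hw⟩ := exists_common_eigenvector_of_isCompactOperator
    (tp.isCompactOperator_tensorOp hA) hz hAz (fun i => (tp.onFactor i (A i)).toLinearMap)
    (fun i => (hcomm_tensorOp i).map ContinuousLinearMap.toLinearMapRingHom)
    (fun i j => (hcomm i j).map ContinuousLinearMap.toLinearMapRingHom)
  choose l hl using hw
  refine ⟨l, fun j => tp.mem_spectrum_of_hasEigenvalue_onFactor <|
    Module.End.hasEigenvalue_of_hasEigenvector ⟨Module.End.mem_eigenspace_iff.2 (hl j), hw0⟩, ?_⟩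
  refine smul_left_injective ℂ hw0 (hzw.symm.trans ?_)
  dsimp only
  rw [← List.prod_ofFn, List.ofFn_eq_map]
  exact prod_map_smul_eq_of_forall_smul_eq (f := fun i => tp.onFactor i (A i)) (c := l) (v := w)
    hl (List.finRange n)

theorem hasEigenvalue_tensorOp_prod {A : Fin n → H →L[ℂ] H} {l : Fin n → ℂ}
    (hl : ∀ j, Module.End.HasEigenvalue (A j).toLinearMap (l j)) :
    Module.End.HasEigenvalue (tp.tensorOp A).toLinearMap (∏ j, l j) := by
  choose x hx using fun j => (hl j).exists_hasEigenvector
  have hAx : ∀ j, A j (x j) = l j • x j := fun j => (hx j).apply_eq_smul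
  refine Module.End.hasEigenvalue_of_hasEigenvector (x := tp.emb x)
    ⟨Module.End.mem_eigenspace_iff.2 ?_, norm_ne_zero_iff.1 ?_⟩
  · rw [ContinuousLinearMap.coe_coe, tensorOp_emb]
    simp only [hAx, emb_smul_univ]
  · rw [norm_emb]
    exact Finset.prod_ne_zero_iff.2 fun j _ => norm_ne_zero_iff.2 (hx j).2

theorem hasEigenvalue_tensorOp_iff {A : Fin n → H →L[ℂ] H} (hA : ∀ i, IsCompactOperator (A i))
    {z : ℂ} (hz : z ≠ 0) :
    Module.End.HasEigenvalue (tp.tensorOp A).toLinearMap z ↔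
      ∃ l : Fin n → ℂ, (∀ j, l j ∈ spectrum ℂ (A j)) ∧ z = ∏ j, l j := by
  refine ⟨tp.exists_eq_prod_of_hasEigenvalue_tensorOp hA hz, ?_⟩
  rintro ⟨l, hl, rfl⟩
  exact tp.hasEigenvalue_tensorOp_prod fun j => ((hA j).hasEigenvalue_iff_mem_spectrum
    (Finset.prod_ne_zero_iff.1 hz j (Finset.mem_univ j))).2 (hl j)

end TensorOp

end TensorPowerStructure

/-- If `T` is a compact operator on a nonzero complex Hilbert space with `‖T‖ < 1`,
then the second quantization `Γ(T)` is a compact operator on the Fock space and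
`σ(Γ(T)) = {0} ∪ {1} ∪ ⋃_{n≥1} { λ₁⋯λₙ : λⱼ ∈ σ(T) }` (no closure needed). -/
theorem spectrum_secondQuantization_of_compact
    {H F : Type*} [NormedAddCommGroup H] [InnerProductSpace ℂ H] [CompleteSpace H]
    [Nontrivial H]
    [NormedAddCommGroup F] [InnerProductSpace ℂ F] [CompleteSpace F]
    (Hn : ℕ → Type*) [∀ n, NormedAddCommGroup (Hn n)]
    [∀ n, InnerProductSpace ℂ (Hn n)] [∀ n, CompleteSpace (Hn n)]
    (tp : ∀ n, TensorPowerStructure H (Hn n) n)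
    (J : ∀ n, Hn n →ₗᵢ[ℂ] F)
    (horth : ∀ n m, n ≠ m → ∀ (x : Hn n) (y : Hn m), ⟪J n x, J m y⟫_ℂ = 0)
    (hdense : Dense ((Submodule.span ℂ
      (⋃ n : ℕ, Set.range (J n)) : Submodule ℂ F) : Set F))
    (T : H →L[ℂ] H) (hT : ‖T‖ < 1) (hTcomp : IsCompactOperator ⇑T)
    (Tn : ∀ n, Hn n →L[ℂ] Hn n) (hTn : ∀ n, IsTensorPowerOp (tp n) T (Tn n))
    (G : F →L[ℂ] F) (hG : ∀ (n : ℕ) (x : Hn n), G (J n x) = J n (Tn n x)) :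
    IsCompactOperator ⇑G ∧
      spectrum ℂ G = {0} ∪ {1} ∪ ⋃ n : ℕ,
        {z : ℂ | ∃ l : Fin (n + 1) → ℂ,
          (∀ j, l j ∈ spectrum ℂ T) ∧ z = ∏ j, l j} := by
  have hsum : IsHilbertSum ℂ Hn J := isHilbertSum_of_dense_span (fun n m => horth n m) hdense
  have hTn_eq := fun n => (tp n).eq_tensorOp (hTn n)
  have hblock : IsBlockDiagonal J Tn G := hG
  have hG_compact : IsCompactOperator G := by
    refine hblock.isCompactOperator hsum (fun n => ?_) ?_
    · rw [hTn_eq]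
      exact (tp n).isCompactOperator_tensorOp fun _ => hTcomp
    · rw [Nat.cofinite_eq_atTop]
      refine squeeze_zero (fun n => norm_nonneg _) (fun n => ?_)
        (tendsto_pow_atTop_nhds_zero_of_lt_one (norm_nonneg T) hT)
      simpa [hTn_eq] using (tp n).norm_tensorOp_le fun _ => T
  refine ⟨hG_compact, Set.ext fun z => ?_⟩
  obtain rfl | hz := eq_or_ne z 0
  · have := fun n => (tp n).nontrivial
    simpa using zero_mem_spectrum_of_isCompactOperator hG_compact
      (not_finiteDimensional_of_orthogonalFamily hsum.OrthogonalFamily)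
  · rw [← hG_compact.hasEigenvalue_iff_mem_spectrum hz, hblock.hasEigenvalue_iff hsum]
    simp only [hTn_eq, (tp _).hasEigenvalue_tensorOp_iff (fun _ => hTcomp) hz]
    rw [← Nat.or_exists_add_one]
    simp [hz]
end

section
/- Let A generate a strongly continuous, eventually norm-continuous semigroup on a Banach space X. Then for every a ∈ ℝ, the set { λ ∈ σ(A) : Re λ ≥ a } is bounded. -/
/-!
Fix `z` and let `U t = exp (-z t) S t`, a semigroup whose generator is `A - z`. With
`V t = ∫₀ᵗ U s ds` one has `(U h - 1) V t = (U t - 1) V h`; averaging over `t ∈ [a, b]`, dividing by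
`h` and letting `h → 0` gives `(A - z) B = K - 1`, where `B` and `K` are the averages of `V` and `U`
over `[a, b]`. Hence `z` is in the resolvent set as soon as `‖K‖ < 1`. If `S` is norm continuous at
`a` and `b` is close to `a`, then `K` is close to the average of `exp (-z t)` times `S a`, and this
scalar average is `O(1 / ‖z‖)` on every half-plane `Re z ≥ c`.
-/

open Filter MeasureTheory Set Topology

section StrongIntegral

variable {𝕜 E G H : Type*} [RCLike 𝕜] [NormedAddCommGroup E] [NormedSpace 𝕜 E]
  [NormedAddCommGroup G] [NormedSpace 𝕜 G] [NormedAddCommGroup H] [NormedSpace 𝕜 H]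

/-- Continuity on `s` of an operator-valued function for the strong operator topology, stated
through its orbits. -/
def StronglyContinuousOn {ι : Type*} [TopologicalSpace ι] (F : ι → E →L[𝕜] G) (s : Set ι) : Prop :=
  ∀ x, ContinuousOn (fun t => F t x) s

namespace StronglyContinuousOn

variable {ι : Type*} [TopologicalSpace ι] {F F' : ι → E →L[𝕜] G} {s s' : Set ι}

lemma mono (hF : StronglyContinuousOn F s) (h : s' ⊆ s) : StronglyContinuousOn F s' :=
  fun x => (hF x).mono h

lemma congr (hF : StronglyContinuousOn F s) (h : ∀ t ∈ s, F t = F' t) :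
    StronglyContinuousOn F' s :=
  fun x => (hF x).congr fun t ht => by simp only [h t ht]

lemma const (T : E →L[𝕜] G) : StronglyContinuousOn (fun _ : ι => T) s :=
  fun _ => continuousOn_const

lemma sub (hF : StronglyContinuousOn F s) (hF' : StronglyContinuousOn F' s) :
    StronglyContinuousOn (fun t => F t - F' t) s :=
  fun x => (hF x).sub (hF' x)

lemma smul {f : ι → 𝕜} (hf : ContinuousOn f s) (hF : StronglyContinuousOn F s) :
    StronglyContinuousOn (fun t => f t • F t) s :=
  fun x => hf.smul (hF x)

lemma clm_comp (T : G →L[𝕜] H) (hF : StronglyContinuousOn F s) :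
    StronglyContinuousOn (fun t => T ∘L F t) s :=
  fun x => T.continuous.comp_continuousOn (hF x)

lemma comp_clm (hF : StronglyContinuousOn F s) (T : H →L[𝕜] E) :
    StronglyContinuousOn (fun t => F t ∘L T) s :=
  fun x => hF (T x)

lemma exists_opNorm_le_of_isCompact [CompleteSpace E] (hF : StronglyContinuousOn F s)
    (hs : IsCompact s) : ∃ C, ∀ t ∈ s, ‖F t‖ ≤ C := by
  obtain ⟨C, hC⟩ := banach_steinhaus (g := fun t : s => F t) fun x =>
    let ⟨C, hC⟩ := hs.exists_bound_of_continuousOn (hF x)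
    ⟨C, fun t => hC t t.2⟩
  exact ⟨C, fun t ht => hC ⟨t, ht⟩⟩

end StronglyContinuousOn

variable {F F' : ℝ → E →L[𝕜] G} {a b C : ℝ}

lemma StronglyContinuousOn.intervalIntegrable (hF : StronglyContinuousOn F (uIcc a b)) (x : E) :
    IntervalIntegrable (fun t => F t x) volume a b :=
  (hF x).intervalIntegrable

variable [NormedSpace ℝ G]

lemma norm_intervalIntegral_apply_le (hC : ∀ t ∈ uIcc a b, ‖F t‖ ≤ C) (x : E) :
    ‖∫ t in a..b, F t x‖ ≤ C * |b - a| * ‖x‖ := by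
  calc ‖∫ t in a..b, F t x‖ ≤ C * ‖x‖ * |b - a| :=
        intervalIntegral.norm_integral_le_of_norm_le_const fun t ht =>
          (F t).le_of_opNorm_le (hC t (uIoc_subset_uIcc ht)) x
    _ = C * |b - a| * ‖x‖ := by ring

variable [IsScalarTower ℝ 𝕜 G] [CompleteSpace E]

open Classical in
/-- The strong (pointwise Bochner) integral `x ↦ ∫ t in a..b, F t x` of an operator-valued function,
as a bounded operator. It is given the junk value `0` if `F` is not strongly continuous on the
interval, so that it is defined without a proof of continuity. -/
noncomputable def strongIntegral (F : ℝ → E →L[𝕜] G) (a b : ℝ) : E →L[𝕜] G :=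
  if hF : StronglyContinuousOn F (uIcc a b) then
    LinearMap.mkContinuousOfExistsBound
      { toFun := fun x => ∫ t in a..b, F t x
        map_add' := fun x y => by
          simp only [map_add]
          exact intervalIntegral.integral_add (hF.intervalIntegrable x) (hF.intervalIntegrable y)
        map_smul' := fun c x => by
          simp only [map_smul, RingHom.id_apply, intervalIntegral.integral_smul] }
      (let ⟨_, hC⟩ := hF.exists_opNorm_le_of_isCompact isCompact_uIcc
       ⟨_, norm_intervalIntegral_apply_le hC⟩)
  else 0

lemma strongIntegral_apply (hF : StronglyContinuousOn F (uIcc a b)) (x : E) :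
    strongIntegral F a b x = ∫ t in a..b, F t x := by
  rw [strongIntegral, dif_pos hF]
  rfl

lemma norm_strongIntegral_le (hF : StronglyContinuousOn F (uIcc a b))
    (hC : ∀ t ∈ uIcc a b, ‖F t‖ ≤ C) : ‖strongIntegral F a b‖ ≤ C * |b - a| := by
  have hC0 : 0 ≤ C := (norm_nonneg _).trans (hC a left_mem_uIcc)
  refine ContinuousLinearMap.opNorm_le_bound _ (by positivity) fun x => ?_
  rw [strongIntegral_apply hF]
  exact norm_intervalIntegral_apply_le hC x

lemma strongIntegral_congr (hF : StronglyContinuousOn F (uIcc a b))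
    (h : ∀ t ∈ uIcc a b, F t = F' t) : strongIntegral F a b = strongIntegral F' a b := by
  have hF' : StronglyContinuousOn F' (uIcc a b) := hF.congr h
  ext x
  rw [strongIntegral_apply hF, strongIntegral_apply hF']
  exact intervalIntegral.integral_congr fun t ht => by simp only [h t ht]

lemma strongIntegral_sub (hF : StronglyContinuousOn F (uIcc a b))
    (hF' : StronglyContinuousOn F' (uIcc a b)) :
    strongIntegral (fun t => F t - F' t) a b = strongIntegral F a b - strongIntegral F' a b := by
  ext x
  rw [sub_apply, strongIntegral_apply (hF.sub hF'), strongIntegral_apply hF,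
    strongIntegral_apply hF']
  exact intervalIntegral.integral_sub (hF.intervalIntegrable x) (hF'.intervalIntegrable x)

lemma strongIntegral_comp [CompleteSpace H] (hF : StronglyContinuousOn F (uIcc a b))
    (T : H →L[𝕜] E) : strongIntegral F a b ∘L T = strongIntegral (fun t => F t ∘L T) a b := by
  ext x
  rw [ContinuousLinearMap.comp_apply, strongIntegral_apply hF, strongIntegral_apply (hF.comp_clm T)]
  rfl

lemma StronglyContinuousOn.strongIntegral_right (hF : StronglyContinuousOn F (uIcc a b)) :
    StronglyContinuousOn (fun t => strongIntegral F a t) (uIcc a b) := fun x =>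
  (intervalIntegral.continuousOn_primitive_interval' (hF.intervalIntegrable x)
    left_mem_uIcc).congr fun _ ht =>
      strongIntegral_apply (hF.mono (uIcc_subset_uIcc_left ht)) x

/-- The mean value over `[a, b]` of a strongly continuous operator-valued function, as a
bounded operator; it is `0` for `a = b`. -/
noncomputable def strongAverage (F : ℝ → E →L[𝕜] G) (a b : ℝ) : E →L[𝕜] G :=
  (b - a)⁻¹ • strongIntegral F a b

variable [CompleteSpace G]

lemma strongIntegral_smul_const {f : ℝ → 𝕜} (hf : ContinuousOn f (uIcc a b)) (T : E →L[𝕜] G) :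
    strongIntegral (fun t => f t • T) a b = (∫ t in a..b, f t) • T := by
  ext x
  rw [strongIntegral_apply (.smul hf (.const T))]
  exact intervalIntegral.integral_smul_const f (T x)

lemma strongIntegral_const (T : E →L[𝕜] G) : strongIntegral (fun _ => T) a b = (b - a) • T := by
  ext x
  rw [strongIntegral_apply (.const T)]
  exact intervalIntegral.integral_const (T x)

lemma StronglyContinuousOn.hasDerivWithinAt_strongIntegral
    (hF : StronglyContinuousOn F (Ici a)) (x : E) :
    HasDerivWithinAt (fun t => strongIntegral F a t x) (F a x) (Ici a) a := by
  have hderiv : HasDerivWithinAt (fun t => ∫ s in a..t, F s x) (F a x) (Ici a) a :=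
    intervalIntegral.integral_hasDerivWithinAt_right .refl
      ⟨Ici a, mem_of_superset self_mem_nhdsWithin Ioi_subset_Ici_self,
        (hF x).aestronglyMeasurable measurableSet_Ici⟩
      ((hF x a self_mem_Ici).mono Ioi_subset_Ici_self)
  refine hderiv.congr_of_mem (fun t ht => ?_) self_mem_Ici
  exact strongIntegral_apply (hF.mono fun s hs => (le_min le_rfl ht).trans hs.1) x

lemma comp_strongIntegral [NormedSpace ℝ H] [IsScalarTower ℝ 𝕜 H] [CompleteSpace H]
    (T : G →L[𝕜] H) (hF : StronglyContinuousOn F (uIcc a b)) :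
    T ∘L strongIntegral F a b = strongIntegral (fun t => T ∘L F t) a b := by
  ext x
  rw [ContinuousLinearMap.comp_apply, strongIntegral_apply hF, strongIntegral_apply (hF.clm_comp T)]
  exact (T.intervalIntegral_comp_comm (hF.intervalIntegrable x)).symm

lemma commute_strongIntegral_right {T : G →L[𝕜] G} {F : ℝ → G →L[𝕜] G}
    (hF : StronglyContinuousOn F (uIcc a b)) (h : ∀ t ∈ uIcc a b, Commute T (F t)) :
    Commute T (strongIntegral F a b) := by
  change T ∘L strongIntegral F a b = strongIntegral F a b ∘L T
  rw [comp_strongIntegral T hF, strongIntegral_comp hF T]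
  exact strongIntegral_congr (hF.clm_comp T) h

lemma commute_strongAverage_right {T : G →L[𝕜] G} {F : ℝ → G →L[𝕜] G}
    (hF : StronglyContinuousOn F (uIcc a b)) (h : ∀ t ∈ uIcc a b, Commute T (F t)) :
    Commute T (strongAverage F a b) :=
  (commute_strongIntegral_right hF h).smul_right _

end StrongIntegral

section Semigroup

variable {𝕜 X : Type*} [RCLike 𝕜] [NormedAddCommGroup X] [NormedSpace 𝕜 X]

/-- `S` restricted to `[0, ∞)` is a strongly continuous one-parameter semigroup. Time is `ℝ`, and
the values at negative times are arbitrary. -/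
structure IsC0Semigroup (S : ℝ → X →L[𝕜] X) : Prop where
  map_zero : S 0 = 1
  map_add : ∀ s t : ℝ, 0 ≤ s → 0 ≤ t → S (s + t) = S s ∘L S t
  stronglyContinuousOn : StronglyContinuousOn S (Ici 0)

namespace IsC0Semigroup

variable {S : ℝ → X →L[𝕜] X} {a b h t : ℝ}

lemma commute (hS : IsC0Semigroup S) (hh : 0 ≤ h) (ht : 0 ≤ t) : Commute (S h) (S t) := by
  change S h ∘L S t = S t ∘L S h
  rw [← hS.map_add h t hh ht, ← hS.map_add t h ht hh, add_comm]

lemma stronglyContinuousOn_uIcc (hS : IsC0Semigroup S) (ha : 0 ≤ a) (hb : 0 ≤ b) :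
    StronglyContinuousOn S (uIcc a b) :=
  hS.stronglyContinuousOn.mono fun _ ht => (le_min ha hb).trans ht.1

end IsC0Semigroup

variable [NormedSpace ℝ X]

/-- The graph of the infinitesimal generator `A` of `S`: `x` is in the domain of `A` and
`A x = y`. -/
def HasGeneratorAt (S : ℝ → X →L[𝕜] X) (x y : X) : Prop :=
  Tendsto (fun t : ℝ => t⁻¹ • (S t x - x)) (𝓝[>] 0) (𝓝 y)

/-- `R` is the bounded inverse `(z - A)⁻¹`, where `A` is the generator of `S`. -/
structure IsGeneratorResolvent (S : ℝ → X →L[𝕜] X) (z : 𝕜) (R : X →L[𝕜] X) : Prop where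
  hasGeneratorAt : ∀ x, HasGeneratorAt S (R x) (z • R x - x)
  apply_smul_sub : ∀ x y, HasGeneratorAt S x y → R (z • x - y) = x

variable {S : ℝ → X →L[𝕜] X} {a b h t : ℝ} {x y : X}

lemma HasGeneratorAt.unique {y' : X} (hy : HasGeneratorAt S x y) (hy' : HasGeneratorAt S x y') :
    y = y' :=
  tendsto_nhds_unique hy hy'

lemma hasDerivWithinAt_Ici_zero_iff_tendsto {f : ℝ → X} :
    HasDerivWithinAt f y (Ici 0) 0 ↔
      Tendsto (fun t : ℝ => t⁻¹ • (f t - f 0)) (𝓝[>] 0) (𝓝 y) := by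
  rw [← hasDerivWithinAt_Ioi_iff_Ici, hasDerivWithinAt_iff_tendsto_slope' self_notMem_Ioi]
  simp only [slope_fun_def, sub_zero, vsub_eq_sub]

lemma hasGeneratorAt_iff_hasDerivWithinAt (hS0 : S 0 = 1) :
    HasGeneratorAt S x y ↔ HasDerivWithinAt (fun t => S t x) y (Ici 0) 0 := by
  rw [hasDerivWithinAt_Ici_zero_iff_tendsto, HasGeneratorAt, hS0]
  rfl

variable [IsScalarTower ℝ 𝕜 X]

lemma HasGeneratorAt.map_of_commute {T : X →L[𝕜] X} (hx : HasGeneratorAt S x y)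
    (hT : ∀ t, 0 < t → Commute (S t) T) : HasGeneratorAt S (T x) (T y) := by
  refine ((T.continuous.tendsto y).comp hx).congr' ?_
  filter_upwards [self_mem_nhdsWithin] with t ht
  have hcomm : S t (T x) = T (S t x) := DFunLike.congr_fun (hT t ht).eq x
  rw [Function.comp_apply, ContinuousLinearMap.map_smul_of_tower, map_sub, hcomm]

namespace IsC0Semigroup

variable [CompleteSpace X]

lemma comp_strongIntegral_zero (hS : IsC0Semigroup S) (hh : 0 ≤ h) (ht : 0 ≤ t) :
    S h ∘L strongIntegral S 0 t = strongIntegral S 0 (t + h) - strongIntegral S 0 h := by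
  have hcont : ∀ {r}, 0 ≤ r → StronglyContinuousOn S (uIcc 0 r) :=
    hS.stronglyContinuousOn_uIcc le_rfl
  ext x
  calc S h (strongIntegral S 0 t x) = ∫ s in 0..t, S h (S s x) := by
        rw [strongIntegral_apply (hcont ht),
          (S h).intervalIntegral_comp_comm ((hcont ht).intervalIntegrable x)]
    _ = ∫ s in 0..t, S (s + h) x := by
        refine intervalIntegral.integral_congr fun s hs => ?_
        rw [uIcc_of_le ht] at hs
        simp only [add_comm s h, hS.map_add h s hh hs.1, ContinuousLinearMap.comp_apply]
    _ = ∫ s in h..t + h, S s x := by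
        rw [intervalIntegral.integral_comp_add_right (fun s => S s x) h, zero_add]
    _ = (∫ s in 0..t + h, S s x) - ∫ s in 0..h, S s x :=
        (intervalIntegral.integral_interval_sub_left
          ((hcont (add_nonneg ht hh)).intervalIntegrable x)
          ((hcont hh).intervalIntegrable x)).symm
    _ = strongIntegral S 0 (t + h) x - strongIntegral S 0 h x := by
        rw [strongIntegral_apply (hcont (add_nonneg ht hh)), strongIntegral_apply (hcont hh)]

lemma sub_one_comp_strongIntegral_comm (hS : IsC0Semigroup S) (hh : 0 ≤ h) (ht : 0 ≤ t) :
    (S h - 1) ∘L strongIntegral S 0 t = (S t - 1) ∘L strongIntegral S 0 h := by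
  change (S h - 1) * _ = (S t - 1) * _
  rw [sub_mul, sub_mul, one_mul, one_mul, ContinuousLinearMap.mul_def, ContinuousLinearMap.mul_def,
    hS.comp_strongIntegral_zero hh ht, hS.comp_strongIntegral_zero ht hh, add_comm t h]
  abel

lemma stronglyContinuousOn_strongIntegral (hS : IsC0Semigroup S) (ha : 0 ≤ a) (hab : a ≤ b) :
    StronglyContinuousOn (fun t => strongIntegral S 0 t) (uIcc a b) :=
  (hS.stronglyContinuousOn_uIcc le_rfl (ha.trans hab)).strongIntegral_right.mono <|
    uIcc_subset_uIcc_right (mem_uIcc_of_le ha hab)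

lemma sub_one_comp_strongAverage_strongIntegral (hS : IsC0Semigroup S) (ha : 0 ≤ a) (hab : a < b)
    (hh : 0 ≤ h) :
    (S h - 1) ∘L strongAverage (fun t => strongIntegral S 0 t) a b =
      (strongAverage S a b - 1) ∘L strongIntegral S 0 h := by
  have hV := hS.stronglyContinuousOn_strongIntegral ha hab.le
  have hcont := hS.stronglyContinuousOn_uIcc ha (ha.trans hab.le)
  have hswap : ∀ t ∈ uIcc a b,
      (S h - 1) ∘L strongIntegral S 0 t = (S t - 1) ∘L strongIntegral S 0 h := fun t ht =>
    hS.sub_one_comp_strongIntegral_comm hh (ha.trans (uIcc_of_le hab.le ▸ ht).1)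
  calc (S h - 1) ∘L strongAverage (fun t => strongIntegral S 0 t) a b
      = (b - a)⁻¹ • strongIntegral (fun t => (S h - 1) ∘L strongIntegral S 0 t) a b := by
        rw [strongAverage, ContinuousLinearMap.comp_smul, comp_strongIntegral _ hV]
    _ = (b - a)⁻¹ • strongIntegral (fun t => (S t - 1) ∘L strongIntegral S 0 h) a b := by
        rw [strongIntegral_congr (hV.clm_comp _) hswap]
    _ = (b - a)⁻¹ • ((strongIntegral S a b - (b - a) • 1) ∘L strongIntegral S 0 h) := by
        rw [← strongIntegral_comp (hcont.sub (.const 1)), strongIntegral_sub hcont (.const 1),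
          strongIntegral_const]
    _ = (strongAverage S a b - 1) ∘L strongIntegral S 0 h := by
        rw [← ContinuousLinearMap.smul_comp, smul_sub, inv_smul_smul₀ (sub_pos.2 hab).ne',
          strongAverage]

lemma tendsto_inv_smul_strongIntegral (hS : IsC0Semigroup S) (x : X) :
    Tendsto (fun h : ℝ => h⁻¹ • strongIntegral S 0 h x) (𝓝[>] 0) (𝓝 x) := by
  have hderiv := hS.stronglyContinuousOn.hasDerivWithinAt_strongIntegral x
  rw [hasDerivWithinAt_Ici_zero_iff_tendsto, hS.map_zero] at hderiv
  simpa [strongIntegral_apply (hS.stronglyContinuousOn_uIcc le_rfl le_rfl)] using hderiv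

lemma hasGeneratorAt_strongAverage_strongIntegral (hS : IsC0Semigroup S) (ha : 0 ≤ a) (hab : a < b)
    (x : X) :
    HasGeneratorAt S (strongAverage (fun t => strongIntegral S 0 t) a b x)
      (strongAverage S a b x - x) := by
  have hlim := ((strongAverage S a b - 1).continuous.tendsto x).comp
    (hS.tendsto_inv_smul_strongIntegral x)
  refine hlim.congr' ?_
  filter_upwards [self_mem_nhdsWithin] with h hh
  rw [Function.comp_apply, ContinuousLinearMap.map_smul_of_tower]
  congr 1
  exact (DFunLike.congr_fun
    (hS.sub_one_comp_strongAverage_strongIntegral ha hab (le_of_lt hh)) x).symm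

lemma commute_strongAverage (hS : IsC0Semigroup S) (ha : 0 ≤ a) (hab : a ≤ b) (hh : 0 ≤ h) :
    Commute (S h) (strongAverage S a b) :=
  commute_strongAverage_right (hS.stronglyContinuousOn_uIcc ha (ha.trans hab)) fun _ ht =>
    hS.commute hh (ha.trans (uIcc_of_le hab ▸ ht).1)

lemma commute_strongAverage_strongIntegral (hS : IsC0Semigroup S) (ha : 0 ≤ a) (hab : a ≤ b)
    (hh : 0 ≤ h) : Commute (S h) (strongAverage (fun t => strongIntegral S 0 t) a b) := by
  refine commute_strongAverage_right (hS.stronglyContinuousOn_strongIntegral ha hab)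
    fun t ht => ?_
  have ht0 : 0 ≤ t := ha.trans (uIcc_of_le hab ▸ ht).1
  exact commute_strongIntegral_right (hS.stronglyContinuousOn_uIcc le_rfl ht0) fun s hs =>
    hS.commute hh (uIcc_of_le ht0 ▸ hs).1

theorem exists_isGeneratorResolvent_zero (hS : IsC0Semigroup S) (ha : 0 ≤ a) (hab : a < b)
    (hunit : IsUnit (1 - strongAverage S a b)) : ∃ R, IsGeneratorResolvent S 0 R := by
  obtain ⟨u, hu⟩ := hunit
  set B := strongAverage (fun t => strongIntegral S 0 t) a b
  set Q : X →L[𝕜] X := ↑u⁻¹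
  have hAB (x : X) : HasGeneratorAt S (B x) (strongAverage S a b x - x) :=
    hS.hasGeneratorAt_strongAverage_strongIntegral ha hab x
  have hQ (x : X) : strongAverage S a b (Q x) - Q x = -x := by
    have hinv : (1 - strongAverage S a b) * Q = 1 := hu ▸ u.mul_inv
    rw [← neg_sub]
    exact congrArg Neg.neg (DFunLike.congr_fun hinv x)
  have hSQ (t : ℝ) (ht : 0 < t) : Commute (S t) Q := by
    refine Commute.units_inv_right ?_
    rw [hu]
    exact (Commute.one_right _).sub_right (hS.commute_strongAverage ha hab.le ht.le)
  refine ⟨B ∘L Q, fun x => ?_, fun x y hxy => ?_⟩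
  · rw [zero_smul, zero_sub]
    exact hQ x ▸ hAB (Q x)
  · have hBQ : HasGeneratorAt S (B (Q x)) (B (Q y)) :=
      (hxy.map_of_commute hSQ).map_of_commute fun t ht =>
        hS.commute_strongAverage_strongIntegral ha hab.le ht.le
    have hBQy : B (Q y) = -x := hBQ.unique (hQ x ▸ hAB (Q x))
    rw [zero_smul, zero_sub, map_neg, ContinuousLinearMap.comp_apply, hBQy, neg_neg]

end IsC0Semigroup

end Semigroup

section ExpRescale

variable {E G X : Type*} [NormedAddCommGroup E] [NormedSpace ℂ E] [NormedAddCommGroup G]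
  [NormedSpace ℂ G] [NormedAddCommGroup X] [NormedSpace ℂ X]
  {S : ℝ → X →L[ℂ] X} {x y : X} {z w : ℂ}

/-- The rescaled family `t ↦ exp (-z t) S t`; if `A` generates the semigroup `S`, then `A - z`
generates the rescaled one. -/
noncomputable def expRescale (z : ℂ) (F : ℝ → E →L[ℂ] G) (t : ℝ) : E →L[ℂ] G :=
  Complex.exp (-z * t) • F t

lemma expRescale_zero_right (z : ℂ) (F : ℝ → E →L[ℂ] G) : expRescale z F 0 = F 0 := by
  simp [expRescale]

lemma expRescale_neg_expRescale (z : ℂ) (F : ℝ → E →L[ℂ] G) :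
    expRescale (-z) (expRescale z F) = F := by
  ext t x
  simp [expRescale, smul_smul, ← Complex.exp_add]

lemma StronglyContinuousOn.rescale {F : ℝ → E →L[ℂ] G} {s : Set ℝ}
    (hF : StronglyContinuousOn F s) (z : ℂ) : StronglyContinuousOn (expRescale z F) s :=
  .smul (by fun_prop) hF

lemma IsC0Semigroup.rescale (hS : IsC0Semigroup S) (z : ℂ) :
    IsC0Semigroup (expRescale z S) where
  map_zero := by rw [expRescale_zero_right, hS.map_zero]
  map_add s t hs ht := by
    have hexp : Complex.exp (-z * ↑(s + t)) = Complex.exp (-z * s) * Complex.exp (-z * t) := by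
      rw [← Complex.exp_add, Complex.ofReal_add, mul_add]
    rw [expRescale, expRescale, expRescale, hexp, hS.map_add s t hs ht, mul_smul,
      ContinuousLinearMap.smul_comp, ContinuousLinearMap.comp_smul]
  stronglyContinuousOn := hS.stronglyContinuousOn.rescale z

lemma HasGeneratorAt.rescale (hx : HasGeneratorAt S x y) (hS0 : S 0 = 1) (z : ℂ) :
    HasGeneratorAt (expRescale z S) x (y - z • x) := by
  rw [hasGeneratorAt_iff_hasDerivWithinAt hS0] at hx
  rw [hasGeneratorAt_iff_hasDerivWithinAt ((expRescale_zero_right z S).trans hS0)]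
  have hexp : HasDerivWithinAt (fun t : ℝ => Complex.exp (-z * t)) (-z) (Ici 0) 0 := by
    simpa using ((Complex.ofRealCLM.hasDerivAt (x := 0)).const_mul (-z)).cexp.hasDerivWithinAt
  have hprod := hexp.smul hx
  simp only [hS0, Complex.ofReal_zero, mul_zero, Complex.exp_zero, one_smul, neg_smul,
    one_apply_eq_self, ← sub_eq_add_neg] at hprod
  exact hprod

lemma IsGeneratorResolvent.of_expRescale {R : X →L[ℂ] X}
    (hR : IsGeneratorResolvent (expRescale z S) w R) (hS0 : S 0 = 1) :
    IsGeneratorResolvent S (z + w) R where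
  hasGeneratorAt x := by
    have hgen := (hR.hasGeneratorAt x).rescale ((expRescale_zero_right z S).trans hS0) (-z)
    rw [expRescale_neg_expRescale] at hgen
    convert hgen using 1
    module
  apply_smul_sub x y hxy := by
    have happ := hR.apply_smul_sub _ _ (hxy.rescale hS0 z)
    convert happ using 2
    module

end ExpRescale

section NormEstimate

variable {E G : Type*} [NormedAddCommGroup E] [NormedSpace ℂ E] [CompleteSpace E]
  [NormedAddCommGroup G] [NormedSpace ℂ G] [CompleteSpace G] {z : ℂ} {a b c C ε : ℝ}

lemma norm_cexp_neg_mul_le {t r : ℝ} (hz : c ≤ z.re) (ht : 0 ≤ t) (htr : t ≤ r) :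
    ‖Complex.exp (-z * t)‖ ≤ Real.exp (|c| * r) := by
  have hre : -z.re ≤ |c| := by linarith [neg_abs_le c]
  rw [Complex.norm_exp]
  gcongr
  calc (-z * t).re = -z.re * t := by simp
    _ ≤ |c| * t := by gcongr
    _ ≤ |c| * r := by gcongr

lemma norm_integral_cexp_neg_mul_le (hz : z ≠ 0)
    (hC : ∀ t ∈ uIcc a b, ‖Complex.exp (-z * t)‖ ≤ C) :
    ‖∫ t in a..b, Complex.exp (-z * t)‖ ≤ 2 * C / ‖z‖ := by
  rw [integral_exp_mul_complex (neg_ne_zero.2 hz), norm_div, norm_neg]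
  gcongr
  calc ‖Complex.exp (-z * b) - Complex.exp (-z * a)‖
      ≤ ‖Complex.exp (-z * b)‖ + ‖Complex.exp (-z * a)‖ := norm_sub_le _ _
    _ ≤ C + C := add_le_add (hC b right_mem_uIcc) (hC a left_mem_uIcc)
    _ = 2 * C := (two_mul C).symm

lemma norm_strongIntegral_expRescale_le {F : ℝ → E →L[ℂ] G} {T : E →L[ℂ] G} (hz : z ≠ 0)
    (hF : StronglyContinuousOn F (uIcc a b)) (hC : ∀ t ∈ uIcc a b, ‖Complex.exp (-z * t)‖ ≤ C)
    (hT : ∀ t ∈ uIcc a b, ‖F t - T‖ ≤ ε) :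
    ‖strongIntegral (expRescale z F) a b‖ ≤ C * ε * |b - a| + 2 * C / ‖z‖ * ‖T‖ := by
  have hexp : ContinuousOn (fun t : ℝ => Complex.exp (-z * t)) (uIcc a b) := by fun_prop
  have hC0 : 0 ≤ C := (norm_nonneg _).trans (hC a left_mem_uIcc)
  have hsplit : strongIntegral (expRescale z F) a b =
      strongIntegral (expRescale z fun t => F t - T) a b +
        (∫ t in a..b, Complex.exp (-z * t)) • T := by
    rw [← strongIntegral_smul_const hexp, eq_comm, ← eq_sub_iff_add_eq,
      ← strongIntegral_sub (hF.rescale z) (.smul hexp (.const T))]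
    refine strongIntegral_congr ((hF.sub (.const T)).rescale z) fun t _ => ?_
    rw [expRescale, expRescale, smul_sub]
  have hdiff : ‖strongIntegral (expRescale z fun t => F t - T) a b‖ ≤ C * ε * |b - a| := by
    refine norm_strongIntegral_le ((hF.sub (.const T)).rescale z) fun t ht => ?_
    rw [expRescale, norm_smul]
    exact mul_le_mul (hC t ht) (hT t ht) (norm_nonneg _) hC0
  calc ‖strongIntegral (expRescale z F) a b‖
      ≤ ‖strongIntegral (expRescale z fun t => F t - T) a b‖ +
          ‖(∫ t in a..b, Complex.exp (-z * t)) • T‖ := hsplit ▸ norm_add_le _ _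
    _ ≤ C * ε * |b - a| + 2 * C / ‖z‖ * ‖T‖ := by
        rw [norm_smul]
        gcongr
        exact norm_integral_cexp_neg_mul_le hz hC

lemma norm_strongAverage_expRescale_le {F : ℝ → E →L[ℂ] G} {T : E →L[ℂ] G} (hz : z ≠ 0)
    (hab : a < b) (hF : StronglyContinuousOn F (Icc a b))
    (hC : ∀ t ∈ Icc a b, ‖Complex.exp (-z * t)‖ ≤ C) (hT : ∀ t ∈ Icc a b, ‖F t - T‖ ≤ ε) :
    ‖strongAverage (expRescale z F) a b‖ ≤ C * ε + 2 * C * ‖T‖ / ((b - a) * ‖z‖) := by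
  have hba : 0 < b - a := sub_pos.2 hab
  rw [← uIcc_of_le hab.le] at hF hC hT
  rw [strongAverage, norm_smul, norm_inv, Real.norm_of_nonneg hba.le, inv_mul_le_iff₀ hba]
  refine (norm_strongIntegral_expRescale_le hz hF hC hT).trans_eq ?_
  rw [abs_of_pos hba]
  field_simp

end NormEstimate

lemma exists_forall_Icc_norm_sub_le {E : Type*} [SeminormedAddCommGroup E] {f : ℝ → E} {a ε : ℝ}
    (hf : ContinuousWithinAt f (Ici a) a) (hε : 0 < ε) :
    ∃ b, a < b ∧ b ≤ a + 1 ∧ ∀ t ∈ Icc a b, ‖f t - f a‖ ≤ ε := by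
  have hev : ∀ᶠ t in 𝓝[≥] a, ‖f t - f a‖ ≤ ε := by
    filter_upwards [hf (Metric.closedBall_mem_nhds (f a) hε)] with t ht
    rwa [mem_preimage, mem_closedBall_iff_norm] at ht
  obtain ⟨b, hab, hb⟩ := (mem_nhdsGE_iff_exists_Icc_subset).1 hev
  exact ⟨min b (a + 1), lt_min hab (lt_add_one a), min_le_right _ _, fun t ht =>
    hb ⟨ht.1, ht.2.trans (min_le_left _ _)⟩⟩

theorem IsC0Semigroup.exists_forall_lt_norm_exists_isGeneratorResolvent
    {X : Type*} [NormedAddCommGroup X] [NormedSpace ℂ X] [CompleteSpace X] {S : ℝ → X →L[ℂ] X}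
    (hS : IsC0Semigroup S) {t : ℝ} (ht : 0 ≤ t) (hcont : ContinuousWithinAt S (Ici t) t) (c : ℝ) :
    ∃ r, ∀ z : ℂ, c ≤ z.re → r < ‖z‖ → ∃ R, IsGeneratorResolvent S z R := by
  set C := Real.exp (|c| * (t + 1))
  have hC : 0 < C := Real.exp_pos _
  obtain ⟨b, htb, hb, hSt⟩ := exists_forall_Icc_norm_sub_le hcont (ε := 1 / (2 * C)) (by positivity)
  have hbt : 0 < b - t := sub_pos.2 htb
  refine ⟨4 * C * ‖S t‖ / (b - t), fun z hzc hz => ?_⟩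
  have hz0 : 0 < ‖z‖ := lt_of_le_of_lt (by positivity) hz
  have havg : ‖strongAverage (expRescale z S) t b‖ < 1 :=
    calc ‖strongAverage (expRescale z S) t b‖
        ≤ C * (1 / (2 * C)) + 2 * C * ‖S t‖ / ((b - t) * ‖z‖) :=
          norm_strongAverage_expRescale_le (norm_pos_iff.1 hz0) htb
            (hS.stronglyContinuousOn.mono fun s hs => ht.trans hs.1)
            (fun s hs => norm_cexp_neg_mul_le hzc (ht.trans hs.1) (hs.2.trans hb)) hSt
      _ < 1 / 2 + 1 / 2 := by
          refine add_lt_add_of_le_of_lt (by field_simp; rfl) ?_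
          rw [div_lt_iff₀ hbt] at hz
          rw [div_lt_iff₀ (by positivity)]
          linarith
      _ = 1 := add_halves 1
  obtain ⟨R, hR⟩ := (hS.rescale z).exists_isGeneratorResolvent_zero ht htb
    (isUnit_one_sub_of_norm_lt_one havg)
  exact ⟨R, add_zero z ▸ hR.of_expRescale hS.map_zero⟩

/-- If `A` is the generator of a strongly continuous semigroup `(S t)` on a complex
Banach space which is norm continuous for `t > t₀`, then for every `a ∈ ℝ` the set
of spectral values of `A` with real part `≥ a` is bounded.  Here the spectrum of the
(in general unbounded) operator `A` with domain `D` is the complement of the set of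
`z ∈ ℂ` admitting a bounded everywhere-defined resolvent `R = (z - A)⁻¹`. -/
theorem isBounded_spectrum_re_ge_of_eventually_norm_continuous
    {X : Type*} [NormedAddCommGroup X] [NormedSpace ℂ X] [CompleteSpace X]
    (S : ℝ → X →L[ℂ] X)
    (hS0 : S 0 = 1)
    (hSadd : ∀ s t : ℝ, 0 ≤ s → 0 ≤ t → S (s + t) = (S s).comp (S t))
    (hScont : ∀ x : X, ContinuousOn (fun t => S t x) (Set.Ici (0 : ℝ)))
    (t₀ : ℝ) (ht₀ : 0 ≤ t₀)
    (hnormcont : ContinuousOn S (Set.Ioi t₀))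
    (D : Submodule ℂ X) (A : D →ₗ[ℂ] X)
    (hdom : ∀ x : X, x ∈ D ↔ ∃ y : X,
      Filter.Tendsto (fun t : ℝ => t⁻¹ • (S t x - x))
        (nhdsWithin 0 (Set.Ioi 0)) (nhds y))
    (hA : ∀ x : D,
      Filter.Tendsto (fun t : ℝ => t⁻¹ • (S t (x : X) - (x : X)))
        (nhdsWithin 0 (Set.Ioi 0)) (nhds (A x)))
    (a : ℝ) :
    Bornology.IsBounded {z : ℂ | a ≤ z.re ∧
      ¬ ∃ R : X →L[ℂ] X,
          (∀ x : X, ∃ hx : R x ∈ D, A ⟨R x, hx⟩ = z • R x - x) ∧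
          (∀ y : D, R (z • (y : X) - A y) = y)} := by
  have hS : IsC0Semigroup S := ⟨hS0, hSadd, hScont⟩
  have hcont : ContinuousWithinAt S (Set.Ici (t₀ + 1)) (t₀ + 1) :=
    (hnormcont.continuousAt (Ioi_mem_nhds (lt_add_one t₀))).continuousWithinAt
  obtain ⟨r, hr⟩ := hS.exists_forall_lt_norm_exists_isGeneratorResolvent (by linarith) hcont a
  refine (Metric.isBounded_closedBall (x := (0 : ℂ)) (r := r)).subset fun z ⟨hza, hz⟩ => ?_
  rw [mem_closedBall_zero_iff]
  by_contra! hrz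
  obtain ⟨R, hR⟩ := hr z hza hrz
  refine hz ⟨R, fun x => ?_, fun y => hR.apply_smul_sub y (A y) (hA y)⟩
  have hx : R x ∈ D := (hdom _).2 ⟨_, hR.hasGeneratorAt x⟩
  exact ⟨hx, tendsto_nhds_unique (hA ⟨R x, hx⟩) (hR.hasGeneratorAt x)⟩
end
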